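/- arXiv:2602.03653 — 2 statements merged into one kernel-verified Lean document; each statement's English description precedes it below -/
import Mathlib

section
/- A double complex of finite-dimensional complex vector spaces with K^{p,q} = 0 unless 0 ≤ p ≤ n and 0 ≤ q ≤ n satisfies the ∂∂̄-lemma if and only if Σ_{k∈ℤ} |h^k_BC − h^k_A| = 0, that is, if and only if h^k_BC = h^k_A for every k. -/
open Submodule

/-- A double complex of complex vector spaces, presented as a bigraded direct-sum
decomposition `K p q` of an ambient space `V`, together with anticommuting
differentials `d1 = ∂` (of bidegree `(1,0)`) and `d2 = ∂̄` (of bidegree `(0,1)`). -/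
structure DoubleComplex (V : Type*) [AddCommGroup V] [Module ℂ V] where
  K : ℤ → ℤ → Submodule ℂ V
  isInternal : DirectSum.IsInternal fun pq : ℤ × ℤ => K pq.1 pq.2
  d1 : V →ₗ[ℂ] V
  d2 : V →ₗ[ℂ] V
  d1_mem : ∀ p q : ℤ, ∀ x ∈ K p q, d1 x ∈ K (p + 1) q
  d2_mem : ∀ p q : ℤ, ∀ x ∈ K p q, d2 x ∈ K p (q + 1)
  d1_d1 : d1 ∘ₗ d1 = 0
  d2_d2 : d2 ∘ₗ d2 = 0
  anticomm : d1 ∘ₗ d2 + d2 ∘ₗ d1 = 0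

/-- The dimension (as a natural number) of the quotient of a submodule `M` of `V`
by (the trace on `M` of) a submodule `N`. -/
noncomputable def qdim {V : Type*} [AddCommGroup V] [Module ℂ V]
    (M N : Submodule ℂ V) : ℕ :=
  Module.finrank ℂ (↥M ⧸ N.comap M.subtype)

/-- The linear map between quotients `M₁/N₁ → M₂/N₂` induced by the identity,
for `M₁ ≤ M₂` and `N₁ ≤ N₂`. -/
def quotMap {V : Type*} [AddCommGroup V] [Module ℂ V] {M₁ N₁ M₂ N₂ : Submodule ℂ V}
    (hM : M₁ ≤ M₂) (hN : N₁ ≤ N₂) :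
    (↥M₁ ⧸ N₁.comap M₁.subtype) →ₗ[ℂ] (↥M₂ ⧸ N₂.comap M₂.subtype) :=
  Submodule.mapQ _ _ (Submodule.inclusion hM) fun _ hx => hN hx

namespace DoubleComplex

variable {V : Type*} [AddCommGroup V] [Module ℂ V] (D : DoubleComplex V)

/-- A double complex is bounded if only finitely many components are non-zero. -/
def Bounded : Prop := Set.Finite {pq : ℤ × ℤ | D.K pq.1 pq.2 ≠ ⊥}

lemma d1_d1_apply (x : V) : D.d1 (D.d1 x) = 0 := by
  simpa using LinearMap.ext_iff.mp D.d1_d1 x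

lemma d2_d2_apply (x : V) : D.d2 (D.d2 x) = 0 := by
  simpa using LinearMap.ext_iff.mp D.d2_d2 x

lemma anticomm_apply (x : V) : D.d1 (D.d2 x) + D.d2 (D.d1 x) = 0 := by
  simpa using LinearMap.ext_iff.mp D.anticomm x

/-- Numerator `ker ∂̄ ∩ K^{p,q}` of the Dolbeault cohomology. -/
def dolN (p q : ℤ) : Submodule ℂ V := LinearMap.ker D.d2 ⊓ D.K p q
/-- Denominator `∂̄ K^{p,q-1}` of the Dolbeault cohomology. -/
def dolD (p q : ℤ) : Submodule ℂ V := (D.K p (q - 1)).map D.d2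
/-- Numerator `ker ∂ ∩ K^{p,q}` of the conjugate Dolbeault cohomology. -/
def conjN (p q : ℤ) : Submodule ℂ V := LinearMap.ker D.d1 ⊓ D.K p q
/-- Denominator `∂ K^{p-1,q}` of the conjugate Dolbeault cohomology. -/
def conjD (p q : ℤ) : Submodule ℂ V := (D.K (p - 1) q).map D.d1
/-- Numerator `ker ∂ ∩ ker ∂̄ ∩ K^{p,q}` of the Bott-Chern cohomology. -/
def bcN (p q : ℤ) : Submodule ℂ V := LinearMap.ker D.d1 ⊓ LinearMap.ker D.d2 ⊓ D.K p q
/-- Denominator `∂∂̄ K^{p-1,q-1}` of the Bott-Chern cohomology. -/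
def bcD (p q : ℤ) : Submodule ℂ V := (D.K (p - 1) (q - 1)).map (D.d1 ∘ₗ D.d2)
/-- Numerator `ker ∂∂̄ ∩ K^{p,q}` of the Aeppli cohomology. -/
def aeN (p q : ℤ) : Submodule ℂ V := LinearMap.ker (D.d1 ∘ₗ D.d2) ⊓ D.K p q
/-- Denominator `∂ K^{p-1,q} + ∂̄ K^{p,q-1}` of the Aeppli cohomology. -/
def aeD (p q : ℤ) : Submodule ℂ V := (D.K (p - 1) q).map D.d1 ⊔ (D.K p (q - 1)).map D.d2

/-- The degree-`k` part `Tot^k = ⊕_{p+q=k} K^{p,q}` of the total complex. -/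
def Tot (k : ℤ) : Submodule ℂ V := ⨆ p : ℤ, D.K p (k - p)
/-- The total differential `d = ∂ + ∂̄`. -/
def dT : V →ₗ[ℂ] V := D.d1 + D.d2
/-- Numerator `ker d ∩ Tot^k` of the de Rham cohomology of the total complex. -/
def dRN (k : ℤ) : Submodule ℂ V := LinearMap.ker D.dT ⊓ D.Tot k
/-- Denominator `d (Tot^{k-1})` of the de Rham cohomology of the total complex. -/
def dRD (k : ℤ) : Submodule ℂ V := (D.Tot (k - 1)).map D.dT

/-- Hodge number `h_∂̄^{p,q}`. -/
noncomputable def hDol (p q : ℤ) : ℕ := qdim (D.dolN p q) (D.dolD p q)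
/-- Conjugate Hodge number `h_∂^{p,q}`. -/
noncomputable def hConj (p q : ℤ) : ℕ := qdim (D.conjN p q) (D.conjD p q)
/-- Bott-Chern number `h_BC^{p,q}`. -/
noncomputable def hBC (p q : ℤ) : ℕ := qdim (D.bcN p q) (D.bcD p q)
/-- Aeppli number `h_A^{p,q}`. -/
noncomputable def hAe (p q : ℤ) : ℕ := qdim (D.aeN p q) (D.aeD p q)
/-- Betti number `b_k` of the total complex. -/
noncomputable def b (k : ℤ) : ℕ := qdim (D.dRN k) (D.dRD k)

/-- The `∂∂̄`-lemma property:
`ker ∂ ∩ ker ∂̄ ∩ (im ∂ + im ∂̄) ∩ K^{p,q} = ∂∂̄ K^{p-1,q-1}` for every `(p,q)`. -/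
def SatisfiesDdbarLemma : Prop :=
  ∀ p q : ℤ,
    LinearMap.ker D.d1 ⊓ LinearMap.ker D.d2 ⊓ (D.conjD p q ⊔ D.dolD p q) ⊓ D.K p q =
      D.bcD p q

end DoubleComplex

namespace DoubleComplex

variable {V : Type*} [AddCommGroup V] [Module ℂ V] (D : DoubleComplex V)

/-- The double complex is concentrated in the square `0 ≤ p ≤ n`, `0 ≤ q ≤ n`. -/
def ConcentratedIn (n : ℕ) : Prop :=
  ∀ p q : ℤ, (p < 0 ∨ (n : ℤ) < p ∨ q < 0 ∨ (n : ℤ) < q) → D.K p q = ⊥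

/-- `h^k_∂̄ = Σ_{p+q=k} h_∂̄^{p,q}`. -/
noncomputable def hDolTot (k : ℤ) : ℕ := ∑ᶠ p : ℤ, D.hDol p (k - p)
/-- `h^k_BC = Σ_{p+q=k} h_BC^{p,q}`. -/
noncomputable def hBCTot (k : ℤ) : ℕ := ∑ᶠ p : ℤ, D.hBC p (k - p)
/-- `h^k_A = Σ_{p+q=k} h_A^{p,q}`. -/
noncomputable def hAeTot (k : ℤ) : ℕ := ∑ᶠ p : ℤ, D.hAe p (k - p)

end DoubleComplex

/-!
The `∂∂̄`-lemma says that every natural map `H_BC^{p,q} → H_A^{p,q}` is injective. Surjectivity at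
`(p,q)` means that `∂` and `∂̄` send `ker ∂∂̄ ∩ K^{p,q}` into `im ∂∂̄`, while injectivity at `(p,q)`
means the same for the `∂` arriving from `K^{p-1,q}` and the `∂̄` arriving from `K^{p,q-1}`. Hence
surjectivity throughout total degree `k` is equivalent to injectivity throughout degree `k + 1`.
So the `∂∂̄`-lemma makes all the maps bijective. Conversely, if the dimensions agree in each total
degree, injectivity throughout degree `k` forces bijectivity there, hence injectivity in degree
`k + 1`, and one climbs from the low degrees, in which the complex vanishes.
-/

section Finsum

variable {ι M : Type*} [AddCommMonoid M] [PartialOrder M] [IsOrderedCancelAddMonoid M]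

lemma finsum_eq_finsum_iff_of_le {f g : ι → M} (hf : f.HasFiniteSupport)
    (hg : g.HasFiniteSupport) (hle : f ≤ g) : ∑ᶠ i, f i = ∑ᶠ i, g i ↔ f = g := by
  refine ⟨fun hsum => ?_, fun hfg => hfg ▸ rfl⟩
  obtain ⟨s, hs⟩ := (hf.union hg).exists_finset_coe
  have hfs : f.support ⊆ s := hs ▸ Set.subset_union_left
  have hgs : g.support ⊆ s := hs ▸ Set.subset_union_right
  rw [finsum_eq_finsetSum_of_support_subset f hfs, finsum_eq_finsetSum_of_support_subset g hgs,
    Finset.sum_eq_sum_iff_of_le fun i _ => hle i] at hsum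
  funext i
  by_cases hi : i ∈ s
  · exact hsum i hi
  · rw [Function.notMem_support.mp fun h => hi (hfs h),
      Function.notMem_support.mp fun h => hi (hgs h)]

lemma finsum_eq_zero_iff_of_nonneg {f : ι → M} (hf : f.HasFiniteSupport) (hnonneg : 0 ≤ f) :
    ∑ᶠ i, f i = 0 ↔ f = 0 := by
  have hzero : (0 : ι → M).HasFiniteSupport := by simp [Function.HasFiniteSupport]
  have hiff := finsum_eq_finsum_iff_of_le hzero hf hnonneg
  rwa [show ∑ᶠ i, (0 : ι → M) i = 0 from finsum_zero, eq_comm, eq_comm (a := 0)] at hiff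

end Finsum

section QuotMap

variable {V : Type*} [AddCommGroup V] [Module ℂ V] {M₁ N₁ M₂ N₂ : Submodule ℂ V}

lemma quotMap_injective_iff (hM : M₁ ≤ M₂) (hN : N₁ ≤ N₂) :
    Function.Injective (quotMap hM hN) ↔ M₁ ⊓ N₂ ≤ N₁ := by
  rw [← LinearMap.ker_eq_bot, quotMap, Submodule.ker_mapQ, eq_bot_iff,
    Submodule.map_le_iff_le_comap, Submodule.comap_bot, Submodule.ker_mkQ]
  exact ⟨fun h x hx => h (x := ⟨x, hx.1⟩) hx.2, fun h x hx => h ⟨x.2, hx⟩⟩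

lemma quotMap_surjective_iff (hM : M₁ ≤ M₂) (hN : N₁ ≤ N₂) :
    Function.Surjective (quotMap hM hN) ↔ M₂ ≤ M₁ ⊔ N₂ := by
  rw [← LinearMap.range_eq_top, quotMap, Submodule.range_mapQ, Submodule.map_mkQ_eq_top,
    Submodule.range_inclusion,
    ← (Submodule.map_injective_of_injective M₂.injective_subtype).eq_iff, Submodule.map_sup,
    Submodule.map_comap_subtype, Submodule.map_comap_subtype, Submodule.map_subtype_top,
    inf_eq_right.2 hM, inf_sup_assoc_of_le N₂ hM, inf_eq_left, sup_comm]

end QuotMap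

namespace DoubleComplex

variable {V : Type*} [AddCommGroup V] [Module ℂ V] (D : DoubleComplex V)

lemma d1_d2_apply (x : V) : D.d1 (D.d2 x) = -D.d2 (D.d1 x) :=
  eq_neg_of_add_eq_zero_left (D.anticomm_apply x)

variable {p q : ℤ}

lemma d1_mem_of_mem_sub_one {x : V} (hx : x ∈ D.K (p - 1) q) : D.d1 x ∈ D.K p q := by
  simpa only [sub_add_cancel] using D.d1_mem (p - 1) q x hx

lemma d2_mem_of_mem_sub_one {x : V} (hx : x ∈ D.K p (q - 1)) : D.d2 x ∈ D.K p q := by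
  simpa only [sub_add_cancel] using D.d2_mem p (q - 1) x hx

lemma mem_bcN {x : V} : x ∈ D.bcN p q ↔ (D.d1 x = 0 ∧ D.d2 x = 0) ∧ x ∈ D.K p q :=
  Iff.rfl

lemma mem_aeN {x : V} : x ∈ D.aeN p q ↔ D.d1 (D.d2 x) = 0 ∧ x ∈ D.K p q :=
  Iff.rfl

lemma mem_aeD {x : V} :
    x ∈ D.aeD p q ↔ ∃ a ∈ D.K (p - 1) q, ∃ b ∈ D.K p (q - 1), D.d1 a + D.d2 b = x := by
  simp [aeD, Submodule.mem_sup]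

variable (p q)

lemma bcN_le_aeN : D.bcN p q ≤ D.aeN p q := fun x hx => by
  obtain ⟨⟨-, hd2⟩, hK⟩ := D.mem_bcN.1 hx
  exact D.mem_aeN.2 ⟨by rw [hd2, map_zero], hK⟩

lemma bcD_le_aeD : D.bcD p q ≤ D.aeD p q := by
  rintro _ ⟨x, hx, rfl⟩
  exact Submodule.mem_sup_left ⟨D.d2 x, D.d2_mem_of_mem_sub_one hx, rfl⟩

lemma bcD_le_bcN : D.bcD p q ≤ D.bcN p q := by
  rintro _ ⟨x, hx, rfl⟩
  refine ⟨⟨?_, ?_⟩, D.d1_mem_of_mem_sub_one (D.d2_mem_of_mem_sub_one hx)⟩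
  · simp [d1_d1_apply]
  · simp [d1_d2_apply, d2_d2_apply]

/-- The Bott–Chern cohomology `H_BC^{p,q}`, as the quotient whose dimension is `D.hBC p q`. -/
abbrev BottChern : Type _ := ↥(D.bcN p q) ⧸ (D.bcD p q).comap (D.bcN p q).subtype

/-- The Aeppli cohomology `H_A^{p,q}`, as the quotient whose dimension is `D.hAe p q`. -/
abbrev Aeppli : Type _ := ↥(D.aeN p q) ⧸ (D.aeD p q).comap (D.aeN p q).subtype

/-- The natural map `H_BC^{p,q} → H_A^{p,q}` induced by the identity of `K^{p,q}`. -/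
def bcToAe : D.BottChern p q →ₗ[ℂ] D.Aeppli p q :=
  quotMap (D.bcN_le_aeN p q) (D.bcD_le_aeD p q)

theorem satisfiesDdbarLemma_iff_bcToAe_injective :
    D.SatisfiesDdbarLemma ↔ ∀ p q, Function.Injective (D.bcToAe p q) := by
  refine forall₂_congr fun p q => ?_
  have hle : D.bcD p q ≤ D.bcN p q ⊓ D.aeD p q := le_inf (D.bcD_le_bcN p q) (D.bcD_le_aeD p q)
  rw [bcToAe, quotMap_injective_iff, inf_right_comm]
  exact ⟨le_of_eq, fun h => le_antisymm h hle⟩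

lemma bcN_inf_aeD :
    D.bcN p q ⊓ D.aeD p q = (D.aeN (p - 1) q).map D.d1 ⊔ (D.aeN p (q - 1)).map D.d2 := by
  apply le_antisymm
  · rintro x ⟨⟨⟨hd1, hd2⟩, -⟩, hx⟩
    obtain ⟨a, ha, b, hb, rfl⟩ := D.mem_aeD.1 hx
    have ha' : D.d1 (D.d2 a) = 0 := by simpa [d2_d2_apply, d1_d2_apply] using hd2
    have hb' : D.d1 (D.d2 b) = 0 := by simpa [d1_d1_apply] using hd1
    exact Submodule.add_mem_sup (Submodule.mem_map_of_mem ⟨ha', ha⟩)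
      (Submodule.mem_map_of_mem ⟨hb', hb⟩)
  · refine sup_le ?_ ?_
    · rintro _ ⟨a, ⟨ha, haK⟩, rfl⟩
      have hd2 : D.d2 (D.d1 a) = 0 := by simpa [d1_d2_apply] using ha
      exact ⟨⟨⟨D.d1_d1_apply a, hd2⟩, D.d1_mem_of_mem_sub_one haK⟩,
        Submodule.mem_sup_left (Submodule.mem_map_of_mem haK)⟩
    · rintro _ ⟨b, ⟨hb, hbK⟩, rfl⟩
      exact ⟨⟨⟨hb, D.d2_d2_apply b⟩, D.d2_mem_of_mem_sub_one hbK⟩,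
        Submodule.mem_sup_right (Submodule.mem_map_of_mem hbK)⟩

theorem bcToAe_injective_iff :
    Function.Injective (D.bcToAe p q) ↔
      (D.aeN (p - 1) q).map D.d1 ≤ D.bcD p q ∧ (D.aeN p (q - 1)).map D.d2 ≤ D.bcD p q := by
  rw [bcToAe, quotMap_injective_iff, bcN_inf_aeD, sup_le_iff]

lemma map_d1_aeD_le : (D.aeD p q).map D.d1 ≤ D.bcD (p + 1) q := by
  rintro _ ⟨x, hx, rfl⟩
  obtain ⟨a, -, b, hb, rfl⟩ := D.mem_aeD.1 hx
  exact ⟨b, by rwa [add_sub_cancel_right], by simp [d1_d1_apply]⟩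

lemma map_d2_aeD_le : (D.aeD p q).map D.d2 ≤ D.bcD p (q + 1) := by
  rintro _ ⟨x, hx, rfl⟩
  obtain ⟨a, ha, b, -, rfl⟩ := D.mem_aeD.1 hx
  exact ⟨-a, by simpa using ha, by simp [d2_d2_apply, d1_d2_apply]⟩

theorem bcToAe_surjective_iff :
    Function.Surjective (D.bcToAe p q) ↔
      (D.aeN p q).map D.d1 ≤ D.bcD (p + 1) q ∧ (D.aeN p q).map D.d2 ≤ D.bcD p (q + 1) := by
  rw [bcToAe, quotMap_surjective_iff]
  constructor
  · intro h
    have hd1 : (D.bcN p q).map D.d1 = ⊥ :=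
      LinearMap.le_ker_iff_map.1 (inf_le_left.trans inf_le_left)
    have hd2 : (D.bcN p q).map D.d2 = ⊥ :=
      LinearMap.le_ker_iff_map.1 (inf_le_left.trans inf_le_right)
    constructor
    · calc (D.aeN p q).map D.d1 ≤ (D.bcN p q ⊔ D.aeD p q).map D.d1 := Submodule.map_mono h
        _ = (D.aeD p q).map D.d1 := by rw [Submodule.map_sup, hd1, bot_sup_eq]
        _ ≤ D.bcD (p + 1) q := D.map_d1_aeD_le p q
    · calc (D.aeN p q).map D.d2 ≤ (D.bcN p q ⊔ D.aeD p q).map D.d2 := Submodule.map_mono h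
        _ = (D.aeD p q).map D.d2 := by rw [Submodule.map_sup, hd2, bot_sup_eq]
        _ ≤ D.bcD p (q + 1) := D.map_d2_aeD_le p q
  · rintro ⟨h1, h2⟩ x hx
    -- If `∂x = ∂∂̄v` and `∂̄x = ∂∂̄u`, then `x - ∂̄v + ∂u` is closed for both differentials.
    obtain ⟨v, hv, (hvx : D.d1 (D.d2 v) = D.d1 x)⟩ := h1 (Submodule.mem_map_of_mem hx)
    obtain ⟨u, hu, (hux : D.d1 (D.d2 u) = D.d2 x)⟩ := h2 (Submodule.mem_map_of_mem hx)
    rw [add_sub_cancel_right] at hv hu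
    have hclosed : x - D.d2 v + D.d1 u ∈ D.bcN p q := by
      refine D.mem_bcN.2 ⟨⟨?_, ?_⟩, ?_⟩
      · simp [d1_d1_apply, hvx]
      · simp [d2_d2_apply, ← hux, d1_d2_apply]
      · exact add_mem (sub_mem hx.2 (D.d2_mem_of_mem_sub_one hv)) (D.d1_mem_of_mem_sub_one hu)
    have hexact : D.d1 (-u) + D.d2 v ∈ D.aeD p q :=
      D.mem_aeD.2 ⟨-u, neg_mem hu, v, hv, rfl⟩
    refine Submodule.mem_sup.2 ⟨_, hclosed, _, hexact, ?_⟩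
    rw [map_neg]
    abel

theorem bcToAe_surjective_degree_iff_injective_add_one (k : ℤ) :
    (∀ p, Function.Surjective (D.bcToAe p (k - p))) ↔
      ∀ p, Function.Injective (D.bcToAe p (k + 1 - p)) := by
  simp only [bcToAe_surjective_iff, bcToAe_injective_iff, forall_and]
  refine and_congr ?_ ?_
  · rw [← (Equiv.subRight (1 : ℤ)).forall_congr_right]
    refine forall_congr' fun p => ?_
    rw [Equiv.subRight_apply, sub_add_cancel, show k - (p - 1) = k + 1 - p by ring]
  · refine forall_congr' fun p => ?_
    rw [show k - p + 1 = k + 1 - p by ring, show k + 1 - p - 1 = k - p by ring]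

theorem SatisfiesDdbarLemma.bcToAe_bijective {D : DoubleComplex V} (h : D.SatisfiesDdbarLemma)
    (p q : ℤ) : Function.Bijective (D.bcToAe p q) := by
  rw [satisfiesDdbarLemma_iff_bcToAe_injective] at h
  refine ⟨h p q, ?_⟩
  have hsurj := (D.bcToAe_surjective_degree_iff_injective_add_one (p + q)).2 (fun r => h r _) p
  rwa [add_sub_cancel_left] at hsurj

theorem SatisfiesDdbarLemma.hBCTot_eq_hAeTot {D : DoubleComplex V} (h : D.SatisfiesDdbarLemma)
    (k : ℤ) : D.hBCTot k = D.hAeTot k :=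
  finsum_congr fun p => (LinearEquiv.ofBijective _ (h.bcToAe_bijective p (k - p))).finrank_eq

theorem bcToAe_surjective_of_hBCTot_eq_hAeTot {k : ℤ}
    [∀ p, FiniteDimensional ℂ (D.Aeppli p (k - p))]
    (hfin : Function.HasFiniteSupport fun p => D.hAe p (k - p))
    (hinj : ∀ p, Function.Injective (D.bcToAe p (k - p)))
    (htot : D.hBCTot k = D.hAeTot k) (p : ℤ) : Function.Surjective (D.bcToAe p (k - p)) := by
  have hle : (fun p => D.hBC p (k - p)) ≤ fun p => D.hAe p (k - p) := fun p =>
    LinearMap.finrank_le_finrank_of_injective (hinj p)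
  have hfinBC : Function.HasFiniteSupport fun p => D.hBC p (k - p) :=
    hfin.subset fun p hp => ((Nat.pos_of_ne_zero hp).trans_le (hle p)).ne'
  have heq := congrFun ((finsum_eq_finsum_iff_of_le hfinBC hfin hle).1 htot) p
  have := FiniteDimensional.of_injective (D.bcToAe p (k - p)) (hinj p)
  exact (LinearMap.injective_iff_surjective_of_finrank_eq_finrank heq).1 (hinj p)

variable {D p q}

lemma subsingleton_bottChern (h : D.K p q = ⊥) : Subsingleton (D.BottChern p q) := by
  have : Subsingleton (D.bcN p q) := by rw [bcN, h, inf_bot_eq]; infer_instance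
  infer_instance

lemma subsingleton_aeppli (h : D.K p q = ⊥) : Subsingleton (D.Aeppli p q) := by
  have : Subsingleton (D.aeN p q) := by rw [aeN, h, inf_bot_eq]; infer_instance
  infer_instance

lemma K_ne_bot_of_hBC_ne_zero (h : D.hBC p q ≠ 0) : D.K p q ≠ ⊥ := fun hK =>
  have := subsingleton_bottChern hK
  h Module.finrank_zero_of_subsingleton

lemma K_ne_bot_of_hAe_ne_zero (h : D.hAe p q ≠ 0) : D.K p q ≠ ⊥ := fun hK =>
  have := subsingleton_aeppli hK
  h Module.finrank_zero_of_subsingleton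

lemma ConcentratedIn.bounded {n : ℕ} (h : D.ConcentratedIn n) : D.Bounded := by
  refine ((Set.finite_Icc 0 (n : ℤ)).prod (Set.finite_Icc 0 (n : ℤ))).subset fun pq hpq => ?_
  by_contra hout
  refine hpq (h pq.1 pq.2 ?_)
  simp only [Set.mem_prod, Set.mem_Icc] at hout
  omega

lemma Bounded.finite_support_hAe (h : D.Bounded) (k : ℤ) :
    Function.HasFiniteSupport fun p => D.hAe p (k - p) := by
  have hinj : Function.Injective fun p : ℤ => (p, k - p) := fun _ _ hp => congrArg Prod.fst hp
  exact (h.preimage hinj.injOn).subset fun p hp => K_ne_bot_of_hAe_ne_zero hp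

lemma Bounded.finite_degrees (h : D.Bounded) : {k | ∃ p, D.K p (k - p) ≠ ⊥}.Finite :=
  (h.image fun pq => pq.1 + pq.2).subset fun k ⟨p, hp⟩ => ⟨(p, k - p), hp, add_sub_cancel p k⟩

lemma Bounded.finite_support_hBCTot (h : D.Bounded) : D.hBCTot.HasFiniteSupport :=
  h.finite_degrees.subset fun _ hk =>
    (not_forall.1 (mt finsum_eq_zero_of_forall_eq_zero hk)).imp fun _ => K_ne_bot_of_hBC_ne_zero

lemma Bounded.finite_support_hAeTot (h : D.Bounded) : D.hAeTot.HasFiniteSupport :=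
  h.finite_degrees.subset fun _ hk =>
    (not_forall.1 (mt finsum_eq_zero_of_forall_eq_zero hk)).imp fun _ => K_ne_bot_of_hAe_ne_zero

lemma Bounded.exists_forall_le_eq_bot (h : D.Bounded) :
    ∃ m, ∀ k ≤ m, ∀ p, D.K p (k - p) = ⊥ := by
  obtain ⟨m, hm⟩ := h.finite_degrees.bddBelow
  refine ⟨m - 1, fun k hk p => ?_⟩
  by_contra hp
  have : m ≤ k := hm ⟨p, hp⟩
  omega

theorem Bounded.satisfiesDdbarLemma_of_hBCTot_eq_hAeTot
    [∀ p q, FiniteDimensional ℂ (D.Aeppli p q)] (hb : D.Bounded)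
    (htot : ∀ k, D.hBCTot k = D.hAeTot k) : D.SatisfiesDdbarLemma := by
  obtain ⟨m, hm⟩ := hb.exists_forall_le_eq_bot
  have hlow : ∀ k ≤ m, ∀ p, Function.Injective (D.bcToAe p (k - p)) := fun k hk p =>
    have := subsingleton_bottChern (hm k hk p)
    Function.injective_of_subsingleton _
  have hstep : ∀ k, (∀ p, Function.Injective (D.bcToAe p (k - p))) →
      ∀ p, Function.Injective (D.bcToAe p (k + 1 - p)) := fun k hinj =>
    (D.bcToAe_surjective_degree_iff_injective_add_one k).1
      (D.bcToAe_surjective_of_hBCTot_eq_hAeTot (hb.finite_support_hAe k) hinj (htot k))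
  have hinj : ∀ k p, Function.Injective (D.bcToAe p (k - p)) := fun k => by
    rcases le_total k m with hk | hk
    · exact hlow k hk
    · exact Int.leInduction (hlow m le_rfl) (fun k _ => hstep k) k hk
  refine D.satisfiesDdbarLemma_iff_bcToAe_injective.2 fun p q => ?_
  have hpq := hinj (p + q) p
  rwa [add_sub_cancel_left] at hpq

theorem Bounded.finsum_abs_hBCTot_sub_hAeTot_eq_zero_iff (hb : D.Bounded) :
    ∑ᶠ k : ℤ, |(D.hBCTot k : ℤ) - (D.hAeTot k : ℤ)| = 0 ↔ ∀ k, D.hBCTot k = D.hAeTot k := by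
  have hfin : Function.HasFiniteSupport fun k => |(D.hBCTot k : ℤ) - (D.hAeTot k : ℤ)| := by
    refine (hb.finite_support_hBCTot.union hb.finite_support_hAeTot).subset fun k hk => ?_
    by_contra hzero
    simp_all
  rw [finsum_eq_zero_iff_of_nonneg hfin fun k => abs_nonneg _]
  simp [funext_iff, sub_eq_zero]

end DoubleComplex

theorem ddbar_iff_hBC_eq_hAe_general {V : Type*} [AddCommGroup V] [Module ℂ V]
    (D : DoubleComplex V) [∀ p q, FiniteDimensional ℂ (D.Aeppli p q)] (hb : D.Bounded) :
    (D.SatisfiesDdbarLemma ↔ (∑ᶠ k : ℤ, |(D.hBCTot k : ℤ) - (D.hAeTot k : ℤ)|) = 0) ∧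
    (D.SatisfiesDdbarLemma ↔ ∀ k : ℤ, D.hBCTot k = D.hAeTot k) := by
  have htot : D.SatisfiesDdbarLemma ↔ ∀ k : ℤ, D.hBCTot k = D.hAeTot k :=
    ⟨fun h => h.hBCTot_eq_hAeTot, hb.satisfiesDdbarLemma_of_hBCTot_eq_hAeTot⟩
  exact ⟨htot.trans hb.finsum_abs_hBCTot_sub_hAeTot_eq_zero_iff.symm, htot⟩

open DoubleComplex in
/-- A double complex of finite-dimensional complex vector spaces with `K^{p,q} = 0`
unless `0 ≤ p ≤ n` and `0 ≤ q ≤ n` satisfies the `∂∂̄`-lemma if and only if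
`Σ_{k∈ℤ} |h^k_BC − h^k_A| = 0`, that is, iff `h^k_BC = h^k_A` for every `k`. -/
theorem ddbar_iff_hBC_eq_hAe {V : Type*} [AddCommGroup V] [Module ℂ V]
    [FiniteDimensional ℂ V] (D : DoubleComplex V) (n : ℕ) (hc : D.ConcentratedIn n) :
    (D.SatisfiesDdbarLemma ↔ (∑ᶠ k : ℤ, |(D.hBCTot k : ℤ) - (D.hAeTot k : ℤ)|) = 0) ∧
    (D.SatisfiesDdbarLemma ↔ ∀ k : ℤ, D.hBCTot k = D.hAeTot k) :=
  ddbar_iff_hBC_eq_hAe_general D hc.bounded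
end

section
/- Let a bounded double complex of complex vector spaces satisfy (im ∂ ∩ im ∂̄) ∩ K^{p,q} ⊆ ∂∂̄K^{p-1,q-1} for every (p,q) with p+q = k+1. Then every d-closed element α of Tot^k is d-cohomologous to an element all of whose bidegree components are both ∂-closed and ∂̄-closed; that is, there exists β ∈ Tot^{k-1} such that each (p,q)-component of α + dβ lies in ker ∂ ∩ ker ∂̄. In particular, the natural map ⊕_{p+q=k} H_BC^{p,q} → H_dR^k is surjective. -/
open Submodule

namespace DoubleComplex

variable {V : Type*} [AddCommGroup V] [Module ℂ V] (D : DoubleComplex V)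

lemma bcN_le_dRN (k p : ℤ) : D.bcN p (k - p) ≤ D.dRN k := by
  rintro x ⟨⟨h1, h2⟩, hK⟩
  constructor
  · have h1' : D.d1 x = 0 := h1
    have h2' : D.d2 x = 0 := h2
    show D.dT x = 0
    simp [dT, LinearMap.add_apply, h1', h2']
  · exact le_iSup (fun r => D.K r (k - r)) p hK

lemma bcD_le_dRD (k p : ℤ) : D.bcD p (k - p) ≤ D.dRD k := by
  rintro x ⟨y, hy, rfl⟩
  refine ⟨D.d2 y, ?_, ?_⟩
  · have h := D.d2_mem (p - 1) (k - p - 1) y hy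
    rw [show k - p - 1 + 1 = k - p by ring] at h
    have hle : D.K (p - 1) (k - p) ≤ D.Tot (k - 1) := by
      have h2 := le_iSup (fun r => D.K r (k - 1 - r)) (p - 1)
      rwa [show k - 1 - (p - 1) = k - p by ring] at h2
    exact hle h
  · show D.dT (D.d2 y) = (D.d1 ∘ₗ D.d2) y
    have h2 : D.d2 (D.d2 y) = 0 := D.d2_d2_apply y
    simp [dT, LinearMap.add_apply, LinearMap.comp_apply, h2]

open DirectSum in
/-- The natural map `⊕_{p+q=k} H_BC^{p,q} → H_dR^k`. -/
noncomputable def bcToDR (k : ℤ) :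
    (⨁ p : ℤ, ↥(D.bcN p (k - p)) ⧸ (D.bcD p (k - p)).comap (D.bcN p (k - p)).subtype)
      →ₗ[ℂ] (↥(D.dRN k) ⧸ (D.dRD k).comap (D.dRN k).subtype) :=
  DirectSum.toModule ℂ ℤ _ fun p => quotMap (D.bcN_le_dRN k p) (D.bcD_le_dRD k p)

end DoubleComplex

/-!
Let `α ∈ Tot^k` be `d`-closed. Then `∂̄α = -∂α` lies in both `∂ Tot^k` and `∂̄ Tot^k`. Since the
bigrading is preserved, this holds component by component, so the hypothesis in total degree
`k + 1` gives `∂̄α = ∂∂̄β` for some `β ∈ Tot^{k-1}`. Now `α + dβ` is still `d`-closed, and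
`∂̄(α + dβ) = ∂̄α + ∂̄∂β = ∂̄α - ∂∂̄β = 0`; hence it is also `∂`-closed, and so are all of its
components.
-/

section IndependentFamilies

variable {R M N ι : Type*} [Ring R] [AddCommGroup M] [Module R M] [AddCommGroup N] [Module R N]

theorem comap_iSup_inf_iSup_of_iSupIndep {A : ι → Submodule R M} {B C : ι → Submodule R N}
    (hC : iSupIndep C) (f : M →ₗ[R] N) (hA : ∀ i, A i ≤ (C i).comap f) (hB : ∀ i, B i ≤ C i) :
    (⨆ i, B i).comap f ⊓ ⨆ i, A i = ⨆ i, (B i).comap f ⊓ A i := by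
  classical
  refine le_antisymm ?_ (iSup_le fun i => inf_le_inf (comap_mono (le_iSup B i)) (le_iSup A i))
  rintro x ⟨hfx, hx⟩
  obtain ⟨a, ha, rfl⟩ := (mem_iSup_iff_exists_finsupp _ _).1 hx
  obtain ⟨b, hb, hab⟩ := (mem_iSup_iff_exists_finsupp _ _).1 hfx
  have hsum : ∑ i ∈ a.support ∪ b.support, f (a i) = ∑ i ∈ a.support ∪ b.support, b i := by
    rw [← map_sum, ← a.sum_of_support_subset Finset.subset_union_left (fun _ y => y) (by simp),
      ← b.sum_of_support_subset Finset.subset_union_right (fun _ y => y) (by simp), hab]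
  have hfa : ∀ i ∈ a.support ∪ b.support, f (a i) = b i :=
    (iSupIndep_iff_finsetSum_eq_imp_eq C).1 hC _ _ _
      (fun i _ => ⟨hA i (ha i), hB i (hb i)⟩) hsum
  refine sum_mem fun i hi => mem_iSup_of_mem i ⟨?_, ha i⟩
  rw [SetLike.mem_coe, mem_comap, hfa i (Finset.mem_union_left _ hi)]
  exact hb i

theorem iSup_inf_iSup_of_iSupIndep {A B C : ι → Submodule R M} (hC : iSupIndep C)
    (hA : ∀ i, A i ≤ C i) (hB : ∀ i, B i ≤ C i) :
    (⨆ i, A i) ⊓ ⨆ i, B i = ⨆ i, A i ⊓ B i := by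
  simpa only [comap_id] using comap_iSup_inf_iSup_of_iSupIndep hC LinearMap.id hB hA

theorem ker_inf_iSup_of_iSupIndep {A : ι → Submodule R M} {C : ι → Submodule R N}
    (hC : iSupIndep C) (f : M →ₗ[R] N) (hA : ∀ i, A i ≤ (C i).comap f) :
    LinearMap.ker f ⊓ ⨆ i, A i = ⨆ i, LinearMap.ker f ⊓ A i := by
  simpa only [iSup_bot, comap_bot] using
    comap_iSup_inf_iSup_of_iSupIndep (B := fun _ => ⊥) hC f hA fun _ => bot_le

end IndependentFamilies

namespace DoubleComplex

variable {V : Type*} [AddCommGroup V] [Module ℂ V] (D : DoubleComplex V)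

theorem dT_apply (x : V) : D.dT x = D.d1 x + D.d2 x :=
  rfl

theorem dT_dT_apply (x : V) : D.dT (D.dT x) = 0 := by
  rw [dT_apply, dT_apply, map_add, map_add, d1_d1_apply, d2_d2_apply, zero_add, add_zero,
    anticomm_apply]

theorem K_le_comap_d1 {p q p' : ℤ} (h : p + 1 = p') : D.K p q ≤ (D.K p' q).comap D.d1 :=
  h ▸ D.d1_mem p q

theorem K_le_comap_d2 {p q q' : ℤ} (h : q + 1 = q') : D.K p q ≤ (D.K p q').comap D.d2 :=
  h ▸ D.d2_mem p q

theorem conjD_le_K (p q : ℤ) : D.conjD p q ≤ D.K p q :=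
  map_le_iff_le_comap.2 (D.K_le_comap_d1 (sub_add_cancel p 1))

theorem dolD_le_K (p q : ℤ) : D.dolD p q ≤ D.K p q :=
  map_le_iff_le_comap.2 (D.K_le_comap_d2 (sub_add_cancel q 1))

theorem K_le_Tot {p q k : ℤ} (h : p + q = k) : D.K p q ≤ D.Tot k := by
  obtain rfl : q = k - p := by lia
  exact le_iSup (fun r => D.K r (k - r)) p

theorem iSupIndep_K_sub (k : ℤ) : iSupIndep fun p => D.K p (k - p) :=
  D.isInternal.submodule_iSupIndep.comp (f := fun p => (p, k - p)) fun _ _ h =>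
    congrArg Prod.fst h

theorem Tot_le_comap_d1 (k : ℤ) : D.Tot k ≤ (D.Tot (k + 1)).comap D.d1 :=
  iSup_le fun _ => (D.K_le_comap_d1 rfl).trans (comap_mono (D.K_le_Tot (by ring)))

theorem Tot_le_comap_d2 (k : ℤ) : D.Tot k ≤ (D.Tot (k + 1)).comap D.d2 :=
  iSup_le fun _ => (D.K_le_comap_d2 rfl).trans (comap_mono (D.K_le_Tot (by ring)))

theorem Tot_le_comap_dT (k : ℤ) : D.Tot k ≤ (D.Tot (k + 1)).comap D.dT :=
  fun _ hx => (D.Tot (k + 1)).add_mem (D.Tot_le_comap_d1 k hx) (D.Tot_le_comap_d2 k hx)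

theorem dRD_le_dRN (k : ℤ) : D.dRD k ≤ D.dRN k := by
  rintro _ ⟨β, hβ, rfl⟩
  exact ⟨D.dT_dT_apply β, by
    simpa only [sub_add_cancel, SetLike.mem_coe, mem_comap] using D.Tot_le_comap_dT (k - 1) hβ⟩

theorem map_d1_Tot (k : ℤ) : (D.Tot k).map D.d1 = ⨆ p, D.conjD p (k + 1 - p) := by
  rw [Tot, Submodule.map_iSup, ← (Equiv.subRight (1 : ℤ)).iSup_comp]
  refine iSup_congr fun p => ?_
  rw [conjD, Equiv.subRight_apply, show k - (p - 1) = k + 1 - p by ring]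

theorem map_d2_Tot (k : ℤ) : (D.Tot k).map D.d2 = ⨆ p, D.dolD p (k + 1 - p) := by
  rw [Tot, Submodule.map_iSup]
  refine iSup_congr fun p => ?_
  rw [dolD, show k + 1 - p - 1 = k - p by ring]

theorem map_d1_d2_Tot (k : ℤ) :
    (D.Tot k).map (D.d1 ∘ₗ D.d2) = ⨆ p, D.bcD p (k + 2 - p) := by
  rw [Tot, Submodule.map_iSup, ← (Equiv.subRight (1 : ℤ)).iSup_comp]
  refine iSup_congr fun p => ?_
  rw [bcD, Equiv.subRight_apply, show k - (p - 1) = k + 2 - p - 1 by ring]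

theorem map_d1_Tot_inf_map_d2_Tot (k : ℤ) :
    (D.Tot k).map D.d1 ⊓ (D.Tot k).map D.d2 =
      ⨆ p, D.conjD p (k + 1 - p) ⊓ D.dolD p (k + 1 - p) := by
  rw [map_d1_Tot, map_d2_Tot]
  exact iSup_inf_iSup_of_iSupIndep (D.iSupIndep_K_sub (k + 1)) (fun p => D.conjD_le_K p _)
    fun p => D.dolD_le_K p _

theorem ker_d1_inf_ker_d2_inf_Tot (k : ℤ) :
    LinearMap.ker D.d1 ⊓ LinearMap.ker D.d2 ⊓ D.Tot k = ⨆ p, D.bcN p (k - p) := by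
  have hd2 : LinearMap.ker D.d2 ⊓ D.Tot k = ⨆ p, LinearMap.ker D.d2 ⊓ D.K p (k - p) :=
    ker_inf_iSup_of_iSupIndep (D.iSupIndep_K_sub (k + 1)) D.d2 fun _ =>
      D.K_le_comap_d2 (by ring)
  -- The target family is reindexed by `p ↦ p + 1` because `∂` raises the first degree.
  have hind : iSupIndep fun p => D.K (p + 1) (k - p) := by
    simpa only [Function.comp_def, add_sub_add_right_eq_sub] using
      (D.iSupIndep_K_sub (k + 1)).comp (add_left_injective (1 : ℤ))
  simp only [bcN, inf_assoc]
  rw [hd2]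
  exact ker_inf_iSup_of_iSupIndep hind D.d1 fun _ => inf_le_right.trans (D.K_le_comap_d1 rfl)

theorem d2_mem_map_d1_Tot_inf_map_d2_Tot {k : ℤ} {α : V} (hα : α ∈ D.dRN k) :
    D.d2 α ∈ (D.Tot k).map D.d1 ⊓ (D.Tot k).map D.d2 := by
  have hdα : D.d1 α + D.d2 α = 0 := hα.1
  refine ⟨⟨-α, neg_mem hα.2, ?_⟩, mem_map_of_mem hα.2⟩
  rw [map_neg, neg_eq_of_add_eq_zero_right hdα]

theorem add_dT_mem_iSup_bcN {k : ℤ} {α β : V} (hα : α ∈ D.dRN k) (hβ : β ∈ D.Tot (k - 1))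
    (h : D.d1 (D.d2 β) = D.d2 α) : α + D.dT β ∈ ⨆ p, D.bcN p (k - p) := by
  have hclosed : α + D.dT β ∈ D.dRN k := add_mem hα (D.dRD_le_dRN k (mem_map_of_mem hβ))
  have hd2 : D.d2 (α + D.dT β) = 0 := by
    rw [dT_apply, map_add, map_add, d2_d2_apply, add_zero, ← h, anticomm_apply]
  have hd1 : D.d1 (α + D.dT β) = 0 := by
    have hd : D.d1 (α + D.dT β) + D.d2 (α + D.dT β) = 0 := hclosed.1
    rwa [hd2, add_zero] at hd
  rw [← ker_d1_inf_ker_d2_inf_Tot]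
  exact ⟨⟨hd1, hd2⟩, hclosed.2⟩

theorem iSup_bcN_le_dRN (k : ℤ) : ⨆ p, D.bcN p (k - p) ≤ D.dRN k :=
  iSup_le (D.bcN_le_dRN k)

theorem mk_mem_range_bcToDR {k : ℤ} {x : V} (hx : x ∈ ⨆ p, D.bcN p (k - p)) :
    Submodule.Quotient.mk ⟨x, D.iSup_bcN_le_dRN k hx⟩ ∈ LinearMap.range (D.bcToDR k) := by
  induction hx using Submodule.iSup_induction' with
  | mem p x hx =>
    exact ⟨DirectSum.lof ℂ ℤ _ p (Submodule.Quotient.mk ⟨x, hx⟩), DirectSum.toModule_lof ..⟩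
  | zero => exact zero_mem _
  | add x y hx hy ihx ihy => exact add_mem ihx ihy

theorem bcToDR_surjective_of_forall_exists {k : ℤ}
    (h : ∀ α ∈ D.dRN k, ∃ β ∈ D.Tot (k - 1), α + D.dT β ∈ ⨆ p, D.bcN p (k - p)) :
    Function.Surjective (D.bcToDR k) := by
  intro c
  obtain ⟨⟨α, hα⟩, rfl⟩ := Submodule.Quotient.mk_surjective _ c
  obtain ⟨β, hβ, hαβ⟩ := h α hα
  obtain ⟨z, hz⟩ := D.mk_mem_range_bcToDR hαβ
  refine ⟨z, hz.trans ((Submodule.Quotient.eq _).2 ⟨β, hβ, ?_⟩)⟩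
  exact (add_sub_cancel_left α (D.dT β)).symm

end DoubleComplex

theorem dclosed_cohomologous_to_pure_closed_general {V : Type*} [AddCommGroup V] [Module ℂ V]
    (D : DoubleComplex V) (k : ℤ)
    (hlem : ∀ p q : ℤ, p + q = k + 1 → D.conjD p q ⊓ D.dolD p q ≤ D.bcD p q) :
    (∀ α ∈ D.dRN k, ∃ β ∈ D.Tot (k - 1), α + D.dT β ∈ ⨆ p : ℤ, D.bcN p (k - p)) ∧
      Function.Surjective (D.bcToDR k) := by
  have him : (D.Tot k).map D.d1 ⊓ (D.Tot k).map D.d2 ≤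
      (D.Tot (k - 1)).map (D.d1 ∘ₗ D.d2) := by
    rw [D.map_d1_Tot_inf_map_d2_Tot, D.map_d1_d2_Tot, show k - 1 + 2 = k + 1 by ring]
    exact iSup_mono fun p => hlem p _ (add_sub_cancel p _)
  have hpure : ∀ α ∈ D.dRN k, ∃ β ∈ D.Tot (k - 1), α + D.dT β ∈ ⨆ p, D.bcN p (k - p) := by
    intro α hα
    obtain ⟨β, hβ, hβα⟩ := him (D.d2_mem_map_d1_Tot_inf_map_d2_Tot hα)
    exact ⟨β, hβ, D.add_dT_mem_iSup_bcN hα hβ hβα⟩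
  exact ⟨hpure, D.bcToDR_surjective_of_forall_exists hpure⟩

open DoubleComplex in
/-- For a bounded double complex satisfying `(im ∂ ∩ im ∂̄) ∩ K^{p,q} ⊆ ∂∂̄K^{p-1,q-1}`
in total degree `p + q = k + 1`: every `d`-closed element of `Tot^k` is
`d`-cohomologous to an element all of whose bidegree components lie in
`ker ∂ ∩ ker ∂̄`; in particular the natural map `⊕_{p+q=k} H_BC^{p,q} → H_dR^k`
is surjective. -/
theorem dclosed_cohomologous_to_pure_closed {V : Type*} [AddCommGroup V] [Module ℂ V]
    (D : DoubleComplex V) (hb : D.Bounded) (k : ℤ)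
    (hlem : ∀ p q : ℤ, p + q = k + 1 →
      D.conjD p q ⊓ D.dolD p q ≤ D.bcD p q) :
    (∀ α ∈ D.dRN k, ∃ β ∈ D.Tot (k - 1),
      α + D.dT β ∈ ⨆ p : ℤ, D.bcN p (k - p)) ∧
    Function.Surjective (D.bcToDR k) := by
  exact dclosed_cohomologous_to_pure_closed_general D k hlem
end
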